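/- arXiv:1706.07880 — 2 statements merged into one kernel-verified Lean document; each statement's English description precedes it below -/
import Mathlib

section
/- (Bounded average second moment of gradients, nonconvex case.) Under the hypotheses of Theorem 2 (filtration, update X_{k+1} = X_k − α·G_k with 0 < α ≤ ζ₁/(γ̂·Q_m), V γ̂-smooth and bounded below by V_inf, conditional bounds ⟨∇V(X_k), E[G_k | ℱ_k]⟩ ≥ ζ₁‖∇V(X_k)‖² and E[‖G_k‖² | ℱ_k] ≤ Q + Q_m‖∇V(X_k)‖² with ζ₁ > 0, Q ≥ 0, Q_m ≥ ζ₁²), one has limsup_{m→∞} (1/m)·Σ_{k=1}^{m} E[‖∇V(X_k)‖²] ≤ γ̂·α·Q/ζ₁. -/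
open MeasureTheory Filter
open scoped RealInnerProductSpace BigOperators

/-- Descent lemma for a function with Lipschitz gradient. -/
lemma cdsgd_descent {N : ℕ} (V : EuclideanSpace ℝ (Fin N) → ℝ) (γh : ℝ) (hγh : 0 < γh)
    (hdiff : Differentiable ℝ V)
    (hLip : LipschitzWith γh.toNNReal (gradient V)) (x d : EuclideanSpace ℝ (Fin N)) :
    V (x + d) ≤ V x + ⟪gradient V x, d⟫ + γh / 2 * ‖d‖ ^ 2 := by
  have hline : ∀ t : ℝ, HasDerivAt (fun s : ℝ => x + s • d) d t := by
    intro t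
    simpa using ((hasDerivAt_id t).smul_const d).const_add x
  have hf : ∀ t : ℝ, HasDerivAt (fun s : ℝ => V (x + s • d)) ⟪gradient V (x + t • d), d⟫ t := by
    intro t
    have h1 := (hdiff (x + t • d)).hasFDerivAt
    have h2 := h1.comp_hasDerivAt t (hline t)
    rwa [(hdiff (x + t • d)).hasGradientAt.fderiv_apply] at h2
  have hB : ∀ t : ℝ, HasDerivAt
      (fun s : ℝ => V x + s * ⟪gradient V x, d⟫ + γh / 2 * s ^ 2 * ‖d‖ ^ 2)
      (⟪gradient V x, d⟫ + γh * t * ‖d‖ ^ 2) t := by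
    intro t
    have h1 : HasDerivAt (fun s : ℝ => V x + s * ⟪gradient V x, d⟫) (1 * ⟪gradient V x, d⟫) t :=
      ((hasDerivAt_id t).mul_const _).const_add _
    have h2 : HasDerivAt (fun s : ℝ => γh / 2 * s ^ 2 * ‖d‖ ^ 2)
        (γh / 2 * (((2 : ℕ) : ℝ) * t ^ (2 - 1)) * ‖d‖ ^ 2) t :=
      ((hasDerivAt_pow 2 t).const_mul _).mul_const _
    exact (h1.add h2).congr_deriv (by push_cast; simp only [pow_one]; ring)
  have key := image_le_of_deriv_right_le_deriv_boundary (a := 0) (b := 1)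
    (f := fun s : ℝ => V (x + s • d))
    (f' := fun t => ⟪gradient V (x + t • d), d⟫)
    (B := fun s : ℝ => V x + s * ⟪gradient V x, d⟫ + γh / 2 * s ^ 2 * ‖d‖ ^ 2)
    (B' := fun t => ⟪gradient V x, d⟫ + γh * t * ‖d‖ ^ 2)
    (fun t _ => (hf t).continuousAt.continuousWithinAt)
    (fun t _ => (hf t).hasDerivWithinAt) (by simp)
    (fun t _ => (hB t).continuousAt.continuousWithinAt)
    (fun t _ => (hB t).hasDerivWithinAt) (by
      intro t ht
      have h1 : ⟪gradient V (x + t • d) - gradient V x, d⟫ ≤ γh * t * ‖d‖ ^ 2 := by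
        refine (real_inner_le_norm _ _).trans ?_
        have h2 := hLip.dist_le_mul (x + t • d) x
        rw [dist_eq_norm, dist_eq_norm, Real.coe_toNNReal _ hγh.le, add_sub_cancel_left,
          norm_smul, Real.norm_of_nonneg ht.1] at h2
        nlinarith [norm_nonneg d]
      rw [inner_sub_left] at h1
      linarith)
  have := key (Set.right_mem_Icc.2 zero_le_one)
  simpa using this

lemma cdsgd_integrable_inner {N : ℕ} {Ω : Type*} {m0 : MeasurableSpace Ω}
    {P : Measure Ω} {f g : Ω → EuclideanSpace ℝ (Fin N)} (hf : MemLp f 2 P) (hg : MemLp g 2 P) :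
    Integrable (fun ω => ⟪f ω, g ω⟫) P := by
  refine Integrable.mono' ((hf.integrable_norm_pow two_ne_zero).add
    (hg.integrable_norm_pow two_ne_zero)) (hf.1.inner hg.1) (ae_of_all _ fun ω => ?_)
  have := norm_inner_le_norm (𝕜 := ℝ) (f ω) (g ω)
  simp only [Pi.add_apply]
  nlinarith [sq_nonneg (‖f ω‖ - ‖g ω‖), sq_nonneg (‖f ω‖), sq_nonneg (‖g ω‖)]

set_option maxHeartbeats 1000000 in
/-- Bounded average second moment of gradients (nonconvex case):
`limsup_{m→∞} (1/m)·Σ_{k=1}^{m} E[‖∇V(X_k)‖²] ≤ γ̂·α·Q/ζ₁`. -/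
theorem cdsgd_fixed_step_nonconvex_average_bound {N : ℕ} {Ω : Type*} {m0 : MeasurableSpace Ω}
    (P : Measure Ω) [IsProbabilityMeasure P] (ℱ : Filtration ℕ m0)
    (V : EuclideanSpace ℝ (Fin N) → ℝ) (γh : ℝ) (hγh : 0 < γh)
    (hdiff : Differentiable ℝ V)
    (hLip : LipschitzWith γh.toNNReal (gradient V))
    (Vinf : ℝ) (hbdd : ∀ x, Vinf ≤ V x)
    (x₁ : EuclideanSpace ℝ (Fin N))
    (X G : ℕ → Ω → EuclideanSpace ℝ (Fin N))
    (α ζ₁ Q Qm : ℝ) (hζ₁ : 0 < ζ₁) (hQ : 0 ≤ Q) (hQm : ζ₁ ^ 2 ≤ Qm)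
    (hα : 0 < α) (hαle : α ≤ ζ₁ / (γh * Qm))
    (hX1 : ∀ᵐ ω ∂P, X 1 ω = x₁)
    (hXmeas : ∀ k, StronglyMeasurable[ℱ k] (X k))
    (hGmeas : ∀ k, StronglyMeasurable[ℱ (k + 1)] (G k))
    (hGint : ∀ k, Integrable (fun ω => ‖G k ω‖ ^ 2) P)
    (hupdate : ∀ k, 1 ≤ k → ∀ ω, X (k + 1) ω = X k ω - α • G k ω)
    (hinner : ∀ k, 1 ≤ k → ∀ᵐ ω ∂P,
      ζ₁ * ‖gradient V (X k ω)‖ ^ 2 ≤ ⟪gradient V (X k ω), (P[G k|ℱ k]) ω⟫)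
    (hsecond : ∀ k, 1 ≤ k → ∀ᵐ ω ∂P,
      (P[(fun ω' => ‖G k ω'‖ ^ 2)|ℱ k]) ω ≤ Q + Qm * ‖gradient V (X k ω)‖ ^ 2) :
    Filter.limsup (fun m : ℕ =>
        (1 / (m : ℝ)) * ∑ k ∈ Finset.Icc 1 m, ∫ ω, ‖gradient V (X k ω)‖ ^ 2 ∂P) atTop ≤
      γh * α * Q / ζ₁ := by
  have hQm0 : 0 < Qm := lt_of_lt_of_le (by positivity) hQm
  have hαQ : α * (γh * Qm) ≤ ζ₁ := (le_div_iff₀ (by positivity)).1 hαle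
  have hGm : ∀ k, StronglyMeasurable (G k) := fun k => (hGmeas k).mono (ℱ.le _)
  have hXm : ∀ k, StronglyMeasurable (X k) := fun k => (hXmeas k).mono (ℱ.le _)
  have hG2 : ∀ k, MemLp (G k) 2 P := fun k =>
    (memLp_two_iff_integrable_sq_norm (hGm k).aestronglyMeasurable).2 (hGint k)
  have hX2 : ∀ k, 1 ≤ k → MemLp (X k) 2 P := by
    intro k hk
    induction k, hk using Nat.le_induction with
    | base => exact (memLp_congr_ae hX1).2 (memLp_const x₁)
    | succ k hk ih =>
      have : X (k + 1) = X k - α • G k := funext fun ω => hupdate k hk ω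
      rw [this]
      exact ih.sub ((hG2 k).const_smul α)
  have hgc : Continuous (gradient V) := hLip.continuous
  have hg2 : ∀ k, 1 ≤ k → MemLp (fun ω => gradient V (X k ω)) 2 P := by
    intro k hk
    have hc : MemLp (fun _ : Ω => ‖gradient V 0‖) 2 P := memLp_const _
    have hn : MemLp (fun ω => γh * ‖X k ω‖) 2 P := (hX2 k hk).norm.const_mul γh
    have hb : MemLp (fun ω => ‖gradient V 0‖ + γh * ‖X k ω‖) 2 P := hc.add hn
    refine MemLp.of_le hb
      (hgc.comp_stronglyMeasurable (hXm k)).aestronglyMeasurable (ae_of_all _ fun ω => ?_)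
    have h2 := hLip.dist_le_mul (X k ω) 0
    rw [dist_eq_norm, dist_zero_right, Real.coe_toNNReal _ hγh.le] at h2
    have h3 := norm_le_norm_add_norm_sub (gradient V 0) (gradient V (X k ω))
    rw [norm_sub_rev] at h3
    refine le_trans ?_ (le_abs_self _)
    linarith
  have hpt : ∀ k, 1 ≤ k → ∀ ω, V (X (k + 1) ω) ≤ V (X k ω)
      - α * ⟪gradient V (X k ω), G k ω⟫ + γh / 2 * α ^ 2 * ‖G k ω‖ ^ 2 := by
    intro k hk ω
    have h := cdsgd_descent V γh hγh hdiff hLip (X k ω) (-(α • G k ω))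
    rw [← sub_eq_add_neg, ← hupdate k hk ω, inner_neg_right, real_inner_smul_right, norm_neg,
      norm_smul, mul_pow, Real.norm_eq_abs, sq_abs] at h
    linarith
  have hin : ∀ k, 1 ≤ k → Integrable (fun ω => ⟪gradient V (X k ω), G k ω⟫) P :=
    fun k hk => cdsgd_integrable_inner (hg2 k hk) (hG2 k)
  have hVi : ∀ k, 1 ≤ k → Integrable (fun ω => V (X k ω)) P := by
    intro k hk
    induction k, hk using Nat.le_induction with
    | base =>
      refine (integrable_const (V x₁)).congr ?_
      filter_upwards [hX1] with ω hω
      rw [hω]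
    | succ k hk ih =>
      refine integrable_of_le_of_le
        (hdiff.continuous.comp_stronglyMeasurable (hXm (k + 1))).aestronglyMeasurable
        (ae_of_all _ fun ω => hbdd _) (ae_of_all _ fun ω => hpt k hk ω)
        (integrable_const Vinf)
        ((ih.sub ((hin k hk).const_mul α)).add ((hGint k).const_mul _))
  have hinE : ∀ k, 1 ≤ k → ζ₁ * ∫ ω, ‖gradient V (X k ω)‖ ^ 2 ∂P
      ≤ ∫ ω, ⟪gradient V (X k ω), G k ω⟫ ∂P := by
    intro k hk
    have hce := condExp_bilin_of_stronglyMeasurable_left (μ := P) (m := ℱ k) (innerSL ℝ)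
      (f := fun ω => gradient V (X k ω)) (g := G k)
      (hgc.comp_stronglyMeasurable (hXmeas k)) (hin k hk) ((hG2 k).integrable one_le_two)
    rw [← integral_condExp (μ := P) (f := fun ω => ⟪gradient V (X k ω), G k ω⟫) (ℱ.le k),
      ← integral_const_mul]
    refine integral_mono_ae (((hg2 k hk).integrable_norm_pow two_ne_zero).const_mul _)
      integrable_condExp ?_
    filter_upwards [hce, hinner k hk] with ω h1 h2
    refine h2.trans (le_of_eq ?_)
    exact h1.symm
  have hseE : ∀ k, 1 ≤ k → ∫ ω, ‖G k ω‖ ^ 2 ∂P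
      ≤ Q + Qm * ∫ ω, ‖gradient V (X k ω)‖ ^ 2 ∂P := by
    intro k hk
    have hi := ((hg2 k hk).integrable_norm_pow two_ne_zero).const_mul Qm
    have : ∫ ω, (Q + Qm * ‖gradient V (X k ω)‖ ^ 2) ∂P
        = Q + Qm * ∫ ω, ‖gradient V (X k ω)‖ ^ 2 ∂P := by
      rw [integral_add (integrable_const _) hi, integral_const_mul]
      simp
    rw [← this, ← integral_condExp (ℱ.le k)]
    exact integral_mono_ae integrable_condExp ((integrable_const _).add hi) (hsecond k hk)
  have hstep : ∀ k, 1 ≤ k → ∫ ω, V (X (k + 1) ω) ∂P ≤ ∫ ω, V (X k ω) ∂P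
      - α * ζ₁ / 2 * ∫ ω, ‖gradient V (X k ω)‖ ^ 2 ∂P + γh / 2 * α ^ 2 * Q := by
    intro k hk
    have h1 : ∫ ω, V (X (k + 1) ω) ∂P ≤ ∫ ω, (V (X k ω)
      - α * ⟪gradient V (X k ω), G k ω⟫ + γh / 2 * α ^ 2 * ‖G k ω‖ ^ 2) ∂P :=
      integral_mono (hVi _ (by omega))
        (((hVi k hk).sub ((hin k hk).const_mul α)).add ((hGint k).const_mul _)) (hpt k hk)
    have hs : Integrable (fun ω => V (X k ω) - α * ⟪gradient V (X k ω), G k ω⟫) P :=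
      (hVi k hk).sub ((hin k hk).const_mul α)
    rw [integral_add hs ((hGint k).const_mul _),
      integral_sub (hVi k hk) ((hin k hk).const_mul α), integral_const_mul,
      integral_const_mul] at h1
    have h2 := mul_le_mul_of_nonneg_left (hinE k hk) hα.le
    have h3 := mul_le_mul_of_nonneg_left (hseE k hk) (by positivity : 0 ≤ γh / 2 * α ^ 2)
    have h0 : 0 ≤ ∫ ω, ‖gradient V (X k ω)‖ ^ 2 ∂P := integral_nonneg fun ω => by positivity
    have h4 := mul_le_mul_of_nonneg_right
      (mul_le_mul_of_nonneg_left hαQ (by positivity : 0 ≤ α / 2)) h0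
    nlinarith
  have hsum : ∀ m : ℕ, α * ζ₁ / 2 * ∑ k ∈ Finset.Icc 1 m, ∫ ω, ‖gradient V (X k ω)‖ ^ 2 ∂P
      ≤ ∫ ω, V (X 1 ω) ∂P - ∫ ω, V (X (m + 1) ω) ∂P + m * (γh / 2 * α ^ 2 * Q) := by
    intro m
    induction m with
    | zero => simp
    | succ m ih =>
      rw [Finset.sum_Icc_succ_top (by omega)]
      have := hstep (m + 1) (by omega)
      push_cast
      linarith
  have hVlow : ∀ k, 1 ≤ k → Vinf ≤ ∫ ω, V (X k ω) ∂P := by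
    intro k hk
    have := integral_mono (μ := P) (integrable_const Vinf) (hVi k hk) (fun ω => hbdd _)
    simpa using this
  set C : ℝ := 2 * (∫ ω, V (X 1 ω) ∂P - Vinf) / (α * ζ₁) with hC
  have hlim : Tendsto (fun m : ℕ => C / (m : ℝ) + γh * α * Q / ζ₁) atTop
      (nhds (γh * α * Q / ζ₁)) := by
    simpa using (tendsto_const_div_atTop_nhds_zero_nat C).add_const (γh * α * Q / ζ₁)
  rw [← hlim.limsup_eq]
  refine limsup_le_limsup ?_ ?_ hlim.isBoundedUnder_le
  · filter_upwards [eventually_ge_atTop 1] with m hm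
    have hm0 : (0 : ℝ) < m := by exact_mod_cast hm
    have h1 := hsum m
    have h2 := hVlow (m + 1) (by omega)
    have h3 : C / (m : ℝ) + γh * α * Q / ζ₁ = (1 / (m : ℝ)) *
        ((∫ ω, V (X 1 ω) ∂P - Vinf + m * (γh / 2 * α ^ 2 * Q)) / (α * ζ₁ / 2)) := by
      rw [hC]
      field_simp
    rw [h3]
    refine mul_le_mul_of_nonneg_left ?_ (by positivity)
    rw [le_div_iff₀ (by positivity)]
    linarith
  · refine IsBoundedUnder.isCoboundedUnder_le (isBoundedUnder_of ⟨0, fun m => ?_⟩)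
    exact mul_nonneg (by positivity)
      (Finset.sum_nonneg fun k _ => integral_nonneg fun ω => by positivity)
end

section
/- (Theorem 4: convergence of CDSGD with diminishing step size, nonconvex case.) Let (Ω, ℱ, P) be a probability space with filtration (ℱ_k)_{k∈ℕ}. Let V : ℝ^N → ℝ be differentiable with ∇V Lipschitz continuous with constant γ' > 0 and bounded below by V_inf ∈ ℝ. Let (α_k)_{k≥1} be a positive nonincreasing sequence with α_k·γ'·Q̂_m ≤ ζ₁ for all k, and let (X_k), (G_k) be random vectors with X₁ = x₁ ∈ ℝ^N almost surely, X_k ℱ_k-measurable, G_k ℱ_{k+1}-measurable with E[‖G_k‖²] < ∞, and X_{k+1} = X_k − α_k·G_k. Assume constants ζ₁ > 0, Q̂ ≥ 0, Q̂_m ≥ ζ₁² such that almost surely ⟨∇V(X_k), E[G_k | ℱ_k]⟩ ≥ ζ₁·‖∇V(X_k)‖² and E[‖G_k‖² | ℱ_k] ≤ Q̂ + Q̂_m·‖∇V(X_k)‖² for all k. Then for every m ≥ 1, Σ_{k=1}^{m} α_k·E[‖∇V(X_k)‖²] ≤ 2·(V(x₁) − V_inf)/ζ₁ + (γ'·Q̂/ζ₁)·Σ_{k=1}^{m}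 α_k². -/
open MeasureTheory Filter
open scoped RealInnerProductSpace BigOperators

lemma descent_aux {N : ℕ} (V : EuclideanSpace ℝ (Fin N) → ℝ) (γ : ℝ) (hγ : 0 < γ)
    (hdiff : Differentiable ℝ V) (hLip : LipschitzWith γ.toNNReal (gradient V))
    (x d : EuclideanSpace ℝ (Fin N)) :
    V (x + d) ≤ V x + ⟪gradient V x, d⟫ + γ / 2 * ‖d‖ ^ 2 := by
  let φ : ℝ → ℝ := fun t => V (x + t • d) - t * ⟪gradient V x, d⟫ - γ / 2 * t ^ 2 * ‖d‖ ^ 2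
  have hφ : ∀ t, HasDerivAt φ (⟪gradient V (x + t • d), d⟫ - ⟪gradient V x, d⟫
      - γ * t * ‖d‖ ^ 2) t := by
    intro t
    have h1 : HasDerivAt (fun t : ℝ => x + t • d) d t := by
      simpa using ((hasDerivAt_id t).smul_const d).const_add x
    have h2 := ((hdiff (x + t • d)).hasGradientAt.hasFDerivAt.comp_hasDerivAt t h1)
    have h3 : HasDerivAt (fun t : ℝ => t * ⟪gradient V x, d⟫) ⟪gradient V x, d⟫ t := by
      simpa using (hasDerivAt_id t).mul_const ⟪gradient V x, d⟫
    have h4 : HasDerivAt (fun t : ℝ => γ / 2 * t ^ 2 * ‖d‖ ^ 2) (γ * t * ‖d‖ ^ 2) t := by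
      have h := ((hasDerivAt_pow 2 t).const_mul (γ / 2)).mul_const (‖d‖ ^ 2)
      have he : γ * t * ‖d‖ ^ 2 = γ / 2 * (((2 : ℕ) : ℝ) * t ^ (2 - 1)) * ‖d‖ ^ 2 := by
        simp only [Nat.cast_ofNat, Nat.add_one_sub_one, pow_one]
        ring
      rw [he]
      exact h
    have h5 := (h2.sub h3).sub h4
    rw [InnerProductSpace.toDual_apply_apply] at h5
    exact h5
  have hanti : AntitoneOn φ (Set.Icc 0 1) := by
    apply antitoneOn_of_deriv_nonpos (convex_Icc 0 1)
    · exact fun t _ => (hφ t).continuousAt.continuousWithinAt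
    · exact fun t _ => (hφ t).differentiableAt.differentiableWithinAt
    · intro t ht
      rw [interior_Icc] at ht
      rw [(hφ t).deriv, ← inner_sub_left]
      have h1 := real_inner_le_norm (gradient V (x + t • d) - gradient V x) d
      have h2 := hLip.dist_le_mul (x + t • d) x
      rw [dist_eq_norm, dist_eq_norm, Real.coe_toNNReal _ hγ.le, add_sub_cancel_left,
        norm_smul, Real.norm_of_nonneg ht.1.le] at h2
      have h3 := mul_le_mul_of_nonneg_right h2 (norm_nonneg d)
      nlinarith
  have := hanti (Set.left_mem_Icc.2 zero_le_one) (Set.right_mem_Icc.2 zero_le_one) zero_le_one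
  simp only [φ, one_smul, zero_smul, add_zero, zero_mul, one_mul, sub_zero, one_pow, mul_one,
    ne_eq, OfNat.ofNat_ne_zero, not_false_eq_true, zero_pow, mul_zero] at this
  linarith

/-- Theorem 4 (convergence of CDSGD with diminishing step size, nonconvex case):
`Σ_{k=1}^{m} α_k·E[‖∇V(X_k)‖²] ≤ 2·(V(x₁) − V_inf)/ζ₁ + (γ'·Q̂/ζ₁)·Σ_{k=1}^{m} α_k²`. -/
theorem cdsgd_diminishing_step_nonconvex {N : ℕ} {Ω : Type*} {m0 : MeasurableSpace Ω}
    (P : Measure Ω) [IsProbabilityMeasure P] (ℱ : Filtration ℕ m0)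
    (V : EuclideanSpace ℝ (Fin N) → ℝ) (γ' : ℝ) (hγ' : 0 < γ')
    (hdiff : Differentiable ℝ V)
    (hLip : LipschitzWith γ'.toNNReal (gradient V))
    (Vinf : ℝ) (hbdd : ∀ x, Vinf ≤ V x)
    (x₁ : EuclideanSpace ℝ (Fin N))
    (X G : ℕ → Ω → EuclideanSpace ℝ (Fin N))
    (ζ₁ Q Qm : ℝ) (hζ₁ : 0 < ζ₁) (hQ : 0 ≤ Q) (hQm : ζ₁ ^ 2 ≤ Qm)
    (α : ℕ → ℝ) (hαpos : ∀ k, 1 ≤ k → 0 < α k)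
    (hαmono : ∀ k l, 1 ≤ k → k ≤ l → α l ≤ α k)
    (hαle : ∀ k, 1 ≤ k → α k * γ' * Qm ≤ ζ₁)
    (hX1 : ∀ᵐ ω ∂P, X 1 ω = x₁)
    (hXmeas : ∀ k, StronglyMeasurable[ℱ k] (X k))
    (hGmeas : ∀ k, StronglyMeasurable[ℱ (k + 1)] (G k))
    (hGint : ∀ k, Integrable (fun ω => ‖G k ω‖ ^ 2) P)
    (hupdate : ∀ k, 1 ≤ k → ∀ ω, X (k + 1) ω = X k ω - α k • G k ω)
    (hinner : ∀ k, 1 ≤ k → ∀ᵐ ω ∂P,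
      ζ₁ * ‖gradient V (X k ω)‖ ^ 2 ≤ ⟪gradient V (X k ω), (P[G k|ℱ k]) ω⟫)
    (hsecond : ∀ k, 1 ≤ k → ∀ᵐ ω ∂P,
      (P[(fun ω' => ‖G k ω'‖ ^ 2)|ℱ k]) ω ≤ Q + Qm * ‖gradient V (X k ω)‖ ^ 2) :
    ∀ m : ℕ, 1 ≤ m →
      (∑ k ∈ Finset.Icc 1 m, α k * ∫ ω, ‖gradient V (X k ω)‖ ^ 2 ∂P) ≤
        2 * (V x₁ - Vinf) / ζ₁ + γ' * Q / ζ₁ * ∑ k ∈ Finset.Icc 1 m, (α k) ^ 2 := by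
  have hX1m : MemLp (X 1) 2 P :=
    MemLp.ae_eq (f := fun _ => x₁) (by filter_upwards [hX1] with ω h using h.symm)
      (memLp_const x₁)
  have hG : ∀ k, MemLp (G k) 2 P := fun k =>
    (memLp_two_iff_integrable_sq_norm
      ((hGmeas k).mono (ℱ.le _)).aestronglyMeasurable).2 (hGint k)
  have hX : ∀ k, 1 ≤ k → MemLp (X k) 2 P := by
    intro k hk
    induction k, hk using Nat.le_induction with
    | base => exact hX1m
    | succ k hk ih =>
      rw [show X (k + 1) = X k - α k • G k from funext (hupdate k hk)]
      exact ih.sub ((hG k).const_smul _)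
  have hcont : Continuous (gradient V) := hLip.continuous
  have hgm : ∀ k, StronglyMeasurable[ℱ k] (fun ω => gradient V (X k ω)) := fun k =>
    hcont.comp_stronglyMeasurable (hXmeas k)
  have hg : ∀ k, 1 ≤ k → MemLp (fun ω => gradient V (X k ω)) 2 P := by
    intro k hk
    have hb : MemLp (fun ω => ‖gradient V 0‖ + γ' * ‖X k ω‖) 2 P := by
      have ha : MemLp (fun _ : Ω => ‖gradient V 0‖) 2 P := memLp_const _
      have hb : MemLp (fun ω => γ' * ‖X k ω‖) 2 P := (hX k hk).norm.const_mul γ'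
      exact ha.add hb
    refine hb.of_le ((hgm k).mono (ℱ.le _)).aestronglyMeasurable (ae_of_all _ fun ω => ?_)
    have h2 := hLip.dist_le_mul (X k ω) 0
    rw [dist_eq_norm, dist_eq_norm, Real.coe_toNNReal _ hγ'.le, sub_zero] at h2
    have h3 := norm_le_norm_add_norm_sub' (gradient V (X k ω)) (gradient V 0)
    rw [Real.norm_eq_abs]
    refine le_trans ?_ (le_abs_self _)
    linarith
  have hV : ∀ k, 1 ≤ k → Integrable (fun ω => V (X k ω)) P := by
    intro k hk
    have hd : MemLp (fun ω => X k ω - x₁) 2 P := (hX k hk).sub (memLp_const x₁)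
    have hb : Integrable (fun ω => |Vinf| + (|V x₁| + ‖gradient V x₁‖ * ‖X k ω - x₁‖
        + γ' / 2 * ‖X k ω - x₁‖ ^ 2)) P :=
      (integrable_const _).add (((integrable_const _).add
        ((hd.integrable one_le_two).norm.const_mul _)).add
        (((memLp_two_iff_integrable_sq_norm hd.1).1 hd).const_mul _))
    refine hb.mono' (hdiff.continuous.comp_stronglyMeasurable
      ((hXmeas k).mono (ℱ.le _))).aestronglyMeasurable (ae_of_all _ fun ω => ?_)
    have h1 := descent_aux V γ' hγ' hdiff hLip x₁ (X k ω - x₁)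
    rw [add_sub_cancel] at h1
    have h2 := real_inner_le_norm (gradient V x₁) (X k ω - x₁)
    have h3 := hbdd (X k ω)
    have h4 : 0 ≤ ‖gradient V x₁‖ * ‖X k ω - x₁‖ := by positivity
    have h5 : 0 ≤ γ' / 2 * ‖X k ω - x₁‖ ^ 2 := by positivity
    rw [Real.norm_eq_abs, abs_le]
    constructor
    · linarith [neg_abs_le Vinf, abs_nonneg (V x₁)]
    · linarith [le_abs_self (V x₁), abs_nonneg Vinf]
  have hstep : ∀ k, 1 ≤ k → ζ₁ / 2 * (α k * ∫ ω, ‖gradient V (X k ω)‖ ^ 2 ∂P) ≤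
      (∫ ω, V (X k ω) ∂P) - (∫ ω, V (X (k + 1) ω) ∂P) + γ' * Q / 2 * α k ^ 2 := by
    intro k hk
    have hgs : Integrable (fun ω => ‖gradient V (X k ω)‖ ^ 2) P :=
      (memLp_two_iff_integrable_sq_norm (hg k hk).1).1 (hg k hk)
    have hin : Integrable (fun ω => ⟪gradient V (X k ω), G k ω⟫) P := by
      refine (hgs.add (hGint k)).mono' ((hg k hk).1.inner (𝕜 := ℝ) (hG k).1)
        (ae_of_all _ fun ω => ?_)
      have ha := abs_real_inner_le_norm (gradient V (X k ω)) (G k ω)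
      show |⟪gradient V (X k ω), G k ω⟫| ≤ ‖gradient V (X k ω)‖ ^ 2 + ‖G k ω‖ ^ 2
      nlinarith [sq_nonneg (‖gradient V (X k ω)‖ - ‖G k ω‖),
        sq_nonneg (‖gradient V (X k ω)‖), sq_nonneg (‖G k ω‖)]
    have hpull : P[fun ω => ⟪gradient V (X k ω), G k ω⟫|ℱ k] =ᵐ[P]
        fun ω => ⟪gradient V (X k ω), (P[G k|ℱ k]) ω⟫ :=
      condExp_bilin_of_stronglyMeasurable_left (innerSL ℝ) (hgm k) hin
        ((hG k).integrable one_le_two)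
    have h1 : ζ₁ * ∫ ω, ‖gradient V (X k ω)‖ ^ 2 ∂P ≤
        ∫ ω, ⟪gradient V (X k ω), G k ω⟫ ∂P := by
      rw [← integral_condExp (ℱ.le k) (f := fun ω => ⟪gradient V (X k ω), G k ω⟫),
        ← integral_const_mul]
      refine integral_mono_ae (hgs.const_mul _) integrable_condExp ?_
      filter_upwards [hpull, hinner k hk] with ω ha hb
      rw [ha]; exact hb
    have h2 : ∫ ω, ‖G k ω‖ ^ 2 ∂P ≤ Q + Qm * ∫ ω, ‖gradient V (X k ω)‖ ^ 2 ∂P := by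
      have h := integral_mono_ae integrable_condExp
        ((integrable_const Q).add (hgs.const_mul Qm)) (hsecond k hk)
      rw [integral_condExp (ℱ.le k)] at h
      simp only [Pi.add_apply] at h
      rw [integral_add (integrable_const Q) (hgs.const_mul Qm), integral_const_mul] at h
      simpa using h
    have h3 : ∫ ω, V (X (k + 1) ω) ∂P ≤ (∫ ω, V (X k ω) ∂P)
        - α k * (∫ ω, ⟪gradient V (X k ω), G k ω⟫ ∂P)
        + γ' / 2 * α k ^ 2 * ∫ ω, ‖G k ω‖ ^ 2 ∂P := by
      have hsub : Integrable (fun ω => V (X k ω) - α k * ⟪gradient V (X k ω), G k ω⟫) P :=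
        (hV k hk).sub (hin.const_mul _)
      rw [← integral_const_mul, ← integral_const_mul, ← integral_sub (hV k hk) (hin.const_mul _),
        ← integral_add hsub ((hGint k).const_mul _)]
      refine integral_mono (hV (k + 1) (by omega))
        (hsub.add ((hGint k).const_mul _)) fun ω => ?_
      have h := descent_aux V γ' hγ' hdiff hLip (X k ω) (-(α k • G k ω))
      rw [← sub_eq_add_neg, ← hupdate k hk, inner_neg_right, norm_neg, norm_smul,
        real_inner_smul_right, mul_pow, Real.norm_eq_abs, sq_abs] at h
      show V (X (k + 1) ω) ≤ V (X k ω) - α k * ⟪gradient V (X k ω), G k ω⟫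
        + γ' / 2 * α k ^ 2 * ‖G k ω‖ ^ 2
      linarith
    have hI : 0 ≤ ∫ ω, ‖gradient V (X k ω)‖ ^ 2 ∂P := integral_nonneg fun ω => by positivity
    have ha := hαpos k hk
    have h4 := mul_le_mul_of_nonneg_left h1 ha.le
    have h5 := mul_le_mul_of_nonneg_left h2 (by positivity : 0 ≤ γ' / 2 * α k ^ 2)
    have h6 := mul_le_mul_of_nonneg_right (hαle k hk) (mul_nonneg ha.le hI)
    linarith
  have hV1 : ∫ ω, V (X 1 ω) ∂P = V x₁ := by
    rw [integral_congr_ae (g := fun _ => V x₁) (by filter_upwards [hX1] with ω h; rw [h])]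
    simp
  have hsum : ∀ m, ζ₁ / 2 * (∑ k ∈ Finset.Icc 1 m, α k * ∫ ω, ‖gradient V (X k ω)‖ ^ 2 ∂P) ≤
      V x₁ - (∫ ω, V (X (m + 1) ω) ∂P) + γ' * Q / 2 * ∑ k ∈ Finset.Icc 1 m, α k ^ 2 := by
    intro m
    induction m with
    | zero => simp [hV1]
    | succ m ih =>
      rw [Finset.sum_Icc_succ_top (by omega), Finset.sum_Icc_succ_top (by omega)]
      have := hstep (m + 1) (by omega)
      linarith
  intro m _
  have hlow : Vinf ≤ ∫ ω, V (X (m + 1) ω) ∂P := by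
    have := integral_mono (integrable_const Vinf) (hV (m + 1) (by omega)) fun ω => hbdd (X (m + 1) ω)
    simpa using this
  have h := hsum m
  rw [div_mul_eq_mul_div, ← add_div, le_div_iff₀ hζ₁]
  linarith
end
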